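/- Let $w : \mathbb{R} \to \mathbb{R}$ be Lipschitz continuous, supported in $[0,1]$, with $\int_0^1 w(t)^2\, dt = 1$. Then the functional $I = \frac{1}{2}\int_0^\infty u^2\, |\widehat{w}(u)|^2\, du$ satisfies $I \ge \frac{\pi^3}{2}$. -/

import Mathlib

open MeasureTheory Set Real

/-- The Fourier transform with the convention
`ŵ(ω) = ∫ w(t) e^{-iωt} dt` used in the paper. -/
noncomputable def fourierTr (w : ℝ → ℝ) (ω : ℝ) : ℂ :=
  ∫ t : ℝ, (w t : ℂ) * Complex.exp (-(Complex.I * ω * t))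

open Filter Topology Asymptotics
open scoped FourierTransform fwdDiff InnerProductSpace ENNReal

/-!
Let `E` be the integral of `ξ ^ 2 * ‖𝓕 f ξ‖ ^ 2`. Translation multiplies `𝓕 f` by a phase, so
Plancherel bounds the energy of every difference: `∫ ‖Δ_[h] f‖ ^ 2 ≤ (2 * π * h) ^ 2 * E`.

A bound in the other direction comes from a discrete Wirtinger inequality. If `f` lives on an
interval of length `N * h`, then `f` and `Δ_[h] f` both live on an interval of length
`L = (N + 1) * h`, so Parseval expresses both `L²` norms through samples of the Fourier transforms
at the frequencies `(n + 1 / 2) / L`. The half-step shift matters: at these frequencies the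
multiplier `2 * |sin (π * h * ξ)|` of `Δ_[h]` is never smaller than `2 * sin (π / (2 * (N + 1)))`.
With `h = (b - a) / N` and `N → ∞`, the two bounds give `∫ ‖f‖ ^ 2 ≤ (2 * (b - a)) ^ 2 * E`, without
differentiating `f`.

The Bochner integral of a nonintegrable function is `0`, so a lower bound on `E` also requires
finite energy. For Lipschitz `f` this is Fatou's lemma applied to the difference quotients.
-/

section Support

open Function

lemma integrable_of_memLp_of_support_subset {α E : Type*} [MeasurableSpace α] {μ : Measure α}
    [NormedAddCommGroup E] {f : α → E} {p : ℝ≥0∞} {s : Set α} (hf : MemLp f p μ) (hp : 1 ≤ p)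
    (hs : μ s ≠ ∞) (hsupp : support f ⊆ s) : Integrable f μ :=
  memLp_one_iff_integrable.1 <| hf.mono_exponent_of_measure_support_ne_top
    (fun _ hx ↦ notMem_support.1 fun h ↦ hx (hsupp h)) hs hp

lemma support_norm_sq {α E : Type*} [NormedAddCommGroup E] (f : α → E) :
    support (fun x ↦ ‖f x‖ ^ 2) = support f :=
  support_comp_eq (fun y : E ↦ ‖y‖ ^ 2) (by simp) f

lemma intervalIntegral_eq_integral_of_support_subset_Icc {E : Type*} [NormedAddCommGroup E]
    [NormedSpace ℝ E] {f : ℝ → E} {a b : ℝ} (hab : a ≤ b) (hsupp : support f ⊆ Icc a b) :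
    ∫ t in a..b, f t = ∫ t, f t := by
  rw [intervalIntegral.integral_of_le hab, ← integral_Icc_eq_integral_Ioc,
    setIntegral_eq_integral_of_forall_compl_eq_zero fun _ ht ↦
      notMem_support.1 fun h ↦ ht (hsupp h)]

lemma support_fwdDiff_subset_Icc {F : Type*} [AddCommGroup F] {f : ℝ → F} {a b h : ℝ} (hh : 0 ≤ h)
    (hsupp : support f ⊆ Icc a b) : support (Δ_[h] f) ⊆ Icc (a - h) b := by
  refine (support_sub (fun t ↦ f (t + h)) f).trans (union_subset (fun t ht ↦ ?_) ?_)
  · have := hsupp (show t + h ∈ support f from ht)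
    exact ⟨by linarith [this.1], by linarith [this.2]⟩
  · exact hsupp.trans (Icc_subset_Icc_left (sub_le_self a hh))

end Support

section FwdDiff

variable {G E : Type*} [AddCommGroup G] [MeasurableSpace G] [MeasurableAdd G] {μ : Measure G}
  [μ.IsAddRightInvariant] [NormedAddCommGroup E] {f : G → E}

lemma memLp_fwdDiff {p : ℝ≥0∞} (hf : MemLp f p μ) (h : G) : MemLp (Δ_[h] f) p μ :=
  (hf.comp_measurePreserving (measurePreserving_add_right μ h)).sub hf

lemma integrable_fwdDiff (hf : Integrable f μ) (h : G) : Integrable (Δ_[h] f) μ :=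
  memLp_one_iff_integrable.1 (memLp_fwdDiff (memLp_one_iff_integrable.2 hf) h)

end FwdDiff

section Fourier

variable {V F : Type*} [NormedAddCommGroup V] [InnerProductSpace ℝ V] [FiniteDimensional ℝ V]
  [MeasurableSpace V] [BorelSpace V] [NormedAddCommGroup F]

lemma continuous_fourier_of_integrable [NormedSpace ℂ F] {f : V → F} (hf : Integrable f) :
    Continuous (𝓕 f) :=
  VectorFourier.fourierIntegral_continuous continuous_fourierChar (innerSL ℝ).continuous₂ hf

lemma norm_fourier_fwdDiff [NormedSpace ℂ F] {f : V → F} (hf : Integrable f) (h ξ : V) :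
    ‖𝓕 (Δ_[h] f) ξ‖ = 2 * |sin (π * ⟪h, ξ⟫_ℝ)| * ‖𝓕 f ξ‖ := by
  have translation : 𝓕 (fun x ↦ f (x + h)) ξ = 𝐞 ⟪h, ξ⟫_ℝ • 𝓕 f ξ :=
    congrFun (VectorFourier.fourierIntegral_comp_add_right 𝐞 volume (innerₗ V) f h) ξ
  have difference : 𝓕 (Δ_[h] f) ξ = 𝓕 (fun x ↦ f (x + h)) ξ - 𝓕 f ξ := by
    simp_rw [Real.fourier_eq, fwdDiff, smul_sub]
    refine integral_sub ?_ ?_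
    · exact (Real.fourierIntegral_convergent_iff ξ).2 (hf.comp_add_right h)
    · exact (Real.fourierIntegral_convergent_iff ξ).2 hf
  have factor : ‖(𝐞 ⟪h, ξ⟫_ℝ : ℂ) - 1‖ = 2 * |sin (π * ⟪h, ξ⟫_ℝ)| := by
    rw [Real.fourierChar_apply, mul_comm, Complex.norm_exp_I_mul_ofReal_sub_one, norm_mul]
    simp [mul_assoc]
  rw [difference, translation, Circle.smul_def, ← factor, ← norm_smul, sub_smul, one_smul]

variable [InnerProductSpace ℂ F] [CompleteSpace F] {f : V → F}

lemma coeFn_fourier_toLp (hf₁ : Integrable f) (hf₂ : MemLp f 2) :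
    (𝓕 (hf₂.toLp f) : Lp F 2) =ᵐ[volume] 𝓕 f := by
  refine ae_eq_of_integral_contDiff_smul_eq
    ((Lp.memLp _).locallyIntegrable one_le_two)
    (continuous_fourier_of_integrable hf₁).locallyIntegrable fun g hg hgs ↦ ?_
  let φ : SchwartzMap V ℂ := (hgs.comp_left Complex.ofReal_zero).toSchwartzMap
    (Complex.ofRealCLM.contDiff.comp hg)
  let u : Lp F 2 (volume : Measure V) := hf₂.toLp f
  calc ∫ ξ, g ξ • (𝓕 u) ξ
      = Lp.toTemperedDistribution (𝓕 u) φ :=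
        (Lp.toTemperedDistribution_apply _ φ).symm
    _ = Lp.toTemperedDistribution u (𝓕 φ) := by
        rw [← Lp.fourier_toTemperedDistribution_eq, TemperedDistribution.fourier_apply]
    _ = ∫ x, 𝓕 (φ : V → ℂ) x • f x := by
        rw [Lp.toTemperedDistribution_apply, SchwartzMap.fourier_coe]
        exact integral_congr_ae <| hf₂.coeFn_toLp.mono fun x hx ↦ congrArg (𝓕 (φ : V → ℂ) x • ·) hx
    _ = ∫ ξ, φ ξ • 𝓕 f ξ := by
        simpa only [flip_innerₗ] using! VectorFourier.integral_fourierIntegral_smul_eq_flip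
          (L := innerₗ V) continuous_fourierChar continuous_inner φ.integrable hf₁
    _ = ∫ ξ, g ξ • 𝓕 f ξ := rfl

lemma memLp_fourier (hf₁ : Integrable f) (hf₂ : MemLp f 2) : MemLp (𝓕 f) 2 :=
  (memLp_congr_ae (coeFn_fourier_toLp hf₁ hf₂)).1 (Lp.memLp _)

theorem integral_norm_sq_fourier (hf₁ : Integrable f) (hf₂ : MemLp f 2) :
    ∫ ξ, ‖𝓕 f ξ‖ ^ 2 = ∫ x, ‖f x‖ ^ 2 := by
  have isometry : lpNorm (𝓕 f) 2 volume = lpNorm f 2 volume := by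
    rw [← toReal_eLpNorm (memLp_fourier hf₁ hf₂).aestronglyMeasurable,
      ← toReal_eLpNorm hf₂.aestronglyMeasurable, ← Lp.norm_toLp f hf₂,
      ← Lp.norm_fourier_eq (hf₂.toLp f), Lp.norm_def,
      eLpNorm_congr_ae (coeFn_fourier_toLp hf₁ hf₂)]
  have norm_sq {g : V → F} (hg : MemLp g 2) : ∫ x, ‖g x‖ ^ 2 = lpNorm g 2 volume ^ 2 := by
    rw [lpNorm_eq_integral_norm_rpow_toReal two_ne_zero ENNReal.ofNat_ne_top
      hg.aestronglyMeasurable]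
    simp only [ENNReal.toReal_ofNat, Real.rpow_ofNat, ← one_div, ← Real.sqrt_eq_rpow]
    exact (Real.sq_sqrt (by positivity)).symm
  rw [norm_sq (memLp_fourier hf₁ hf₂), norm_sq hf₂, isometry]

theorem integral_norm_sq_fwdDiff_le (hf₁ : Integrable f) (hf₂ : MemLp f 2)
    (hξ : Integrable fun ξ ↦ ‖ξ‖ ^ 2 * ‖𝓕 f ξ‖ ^ 2) (h : V) :
    ∫ x, ‖Δ_[h] f x‖ ^ 2 ≤ (2 * π * ‖h‖) ^ 2 * ∫ ξ, ‖ξ‖ ^ 2 * ‖𝓕 f ξ‖ ^ 2 := by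
  have pointwise (ξ : V) : ‖𝓕 (Δ_[h] f) ξ‖ ≤ 2 * π * ‖h‖ * (‖ξ‖ * ‖𝓕 f ξ‖) := by
    have : |sin (π * ⟪h, ξ⟫_ℝ)| ≤ π * (‖h‖ * ‖ξ‖) := calc
      _ ≤ |π * ⟪h, ξ⟫_ℝ| := abs_sin_le_abs
      _ = π * |⟪h, ξ⟫_ℝ| := by rw [abs_mul, abs_of_pos pi_pos]
      _ ≤ π * (‖h‖ * ‖ξ‖) := by gcongr; exact abs_real_inner_le_norm h ξ
    calc ‖𝓕 (Δ_[h] f) ξ‖ = 2 * |sin (π * ⟪h, ξ⟫_ℝ)| * ‖𝓕 f ξ‖ := norm_fourier_fwdDiff hf₁ h ξ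
      _ ≤ 2 * (π * (‖h‖ * ‖ξ‖)) * ‖𝓕 f ξ‖ := by gcongr
      _ = 2 * π * ‖h‖ * (‖ξ‖ * ‖𝓕 f ξ‖) := by ring
  rw [← integral_norm_sq_fourier (integrable_fwdDiff hf₁ h) (memLp_fwdDiff hf₂ h),
    ← integral_const_mul]
  refine integral_mono_of_nonneg (.of_forall fun ξ ↦ sq_nonneg _) (hξ.const_mul _)
    (.of_forall fun ξ ↦ ?_)
  simpa only [mul_pow] using pow_le_pow_left₀ (norm_nonneg _) (pointwise ξ) 2

end Fourier

section DifferenceQuotients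

variable {F : Type*} [NormedAddCommGroup F] {f : ℝ → F}

lemma tendsto_sin_mul_div_nhdsNE_zero (c : ℝ) :
    Tendsto (fun h ↦ sin (c * h) / h) (𝓝[≠] 0) (𝓝 c) := by
  have : HasDerivAt (fun h ↦ sin (c * h)) c 0 := by
    simpa using ((hasDerivAt_id (0 : ℝ)).const_mul c).sin
  simpa [inv_mul_eq_div] using this.tendsto_slope_zero

lemma isBigO_integral_norm_sq_fwdDiff_of_lipschitzWith {K : NNReal} {a b : ℝ}
    (hf : LipschitzWith K f) (hsupp : Function.support f ⊆ Icc a b) :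
    (fun h ↦ ∫ t, ‖Δ_[h] f t‖ ^ 2) =O[𝓝[>] 0] fun h ↦ h ^ 2 := by
  refine .of_bound (K ^ 2 * volume.real (Icc (a - 1) b)) ?_
  filter_upwards [Ioo_mem_nhdsGT one_pos] with h hh
  have hsuppΔ : Function.support (fun t ↦ ‖Δ_[h] f t‖ ^ 2) ⊆ Icc (a - 1) b := by
    rw [support_norm_sq]
    exact (support_fwdDiff_subset_Icc hh.1.le hsupp).trans
      (Icc_subset_Icc_left (sub_le_sub_left hh.2.le a))
  have bound (t : ℝ) : ‖‖Δ_[h] f t‖ ^ 2‖ ≤ (K * |h|) ^ 2 := by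
    have := hf.norm_sub_le (t + h) t
    rw [add_sub_cancel_left, Real.norm_eq_abs] at this
    rw [norm_pow, norm_norm]
    gcongr
    exact this
  calc ‖∫ t, ‖Δ_[h] f t‖ ^ 2‖ = ‖∫ t in Icc (a - 1) b, ‖Δ_[h] f t‖ ^ 2‖ := by
        rw [setIntegral_eq_integral_of_forall_compl_eq_zero fun _ ht ↦
          Function.notMem_support.1 fun hne ↦ ht (hsuppΔ hne)]
    _ ≤ (K * |h|) ^ 2 * volume.real (Icc (a - 1) b) :=
        norm_setIntegral_le_of_norm_le_const measure_Icc_lt_top fun t _ ↦ bound t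
    _ = K ^ 2 * volume.real (Icc (a - 1) b) * ‖h ^ 2‖ := by
        rw [norm_pow, Real.norm_eq_abs]
        ring

variable [InnerProductSpace ℂ F] [CompleteSpace F]

lemma integrable_sq_mul_norm_fourier_sq_of_isBigO (hf₁ : Integrable f) (hf₂ : MemLp f 2)
    (hΔ : (fun h ↦ ∫ t, ‖Δ_[h] f t‖ ^ 2) =O[𝓝[>] 0] fun h ↦ h ^ 2) :
    Integrable fun ξ ↦ ξ ^ 2 * ‖𝓕 f ξ‖ ^ 2 := by
  obtain ⟨C, hC₀, hC⟩ := hΔ.exists_nonneg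
  obtain ⟨h, hh⟩ := exists_seq_tendsto (𝓝[>] (0 : ℝ))
  have limit (ξ : ℝ) : Tendsto (fun n ↦ ‖𝓕 (Δ_[h n] f) ξ‖ ^ 2 / h n ^ 2) atTop
      (𝓝 ((2 * π) ^ 2 * (ξ ^ 2 * ‖𝓕 f ξ‖ ^ 2))) := by
    have sin_div := (tendsto_sin_mul_div_nhdsNE_zero (π * ξ)).comp
      (hh.mono_right (nhdsGT_le_nhdsNE 0))
    convert (sin_div.pow 2).const_mul (4 * ‖𝓕 f ξ‖ ^ 2) using 2
    · rw [norm_fourier_fwdDiff hf₁, mul_pow, mul_pow, sq_abs]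
      simp only [RCLike.inner_apply, conj_trivial, Function.comp_apply]
      ring_nf
    · ring
  have integrable (n : ℕ) : Integrable fun ξ ↦ ‖𝓕 (Δ_[h n] f) ξ‖ ^ 2 / h n ^ 2 :=
    ((memLp_fourier (integrable_fwdDiff hf₁ _) (memLp_fwdDiff hf₂ _)).integrable_norm_pow
      two_ne_zero).div_const _
  have finite_energy : ∀ᶠ n in atTop,
      ∫⁻ ξ, ‖‖𝓕 (Δ_[h n] f) ξ‖ ^ 2 / h n ^ 2‖ₑ ≤ ENNReal.ofReal C := by
    filter_upwards [hh.eventually hC.bound] with n hn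
    have energy : ∫ ξ, ‖𝓕 (Δ_[h n] f) ξ‖ ^ 2 / h n ^ 2 ≤ C := by
      rw [integral_div, integral_norm_sq_fourier (integrable_fwdDiff hf₁ _) (memLp_fwdDiff hf₂ _)]
      rw [Real.norm_of_nonneg (sq_nonneg _)] at hn
      exact div_le_of_le_mul₀ (sq_nonneg _) hC₀ ((le_abs_self _).trans hn)
    rw [← ofReal_integral_norm_eq_lintegral_enorm (integrable n)]
    simpa only [norm_div, norm_pow, norm_norm, Real.norm_eq_abs, sq_abs] using
      ENNReal.ofReal_le_ofReal energy
  refine (integrable_const_mul_iff (by positivity : (2 * π) ^ 2 ≠ 0).isUnit _).1 <|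
    integrable_of_tendsto (.of_forall limit) (fun n ↦ (integrable n).aestronglyMeasurable)
      ((liminf_le_of_frequently_le' finite_energy.frequently).trans_lt ENNReal.ofReal_lt_top).ne

end DifferenceQuotients

section Wirtinger

variable {f : ℝ → ℂ} {a b : ℝ}

lemma fourierCoeffOn_fourierChar_smul (hab : a < b) (hsupp : Function.support f ⊆ Icc a b)
    (s : ℝ) (n : ℤ) :
    fourierCoeffOn hab (fun t ↦ 𝐞 (-(t * s)) • f t) n = (b - a)⁻¹ • 𝓕 f (s + n / (b - a)) := by
  have hsupp' : Function.support (fun t ↦ 𝐞 (-(t * (s + n / (b - a)))) • f t) ⊆ Icc a b :=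
    (Function.support_smul_subset_right _ f).trans hsupp
  rw [fourierCoeffOn_eq_integral, Real.fourier_real_eq, one_div,
    ← intervalIntegral_eq_integral_of_support_subset_Icc hab.le hsupp']
  congr 1
  refine intervalIntegral.integral_congr fun t _ ↦ ?_
  simp only [fourier_coe_apply, Circle.smul_def, Real.fourierChar_apply, smul_eq_mul, ← mul_assoc,
    ← Complex.exp_add]
  congr 2
  push_cast
  ring

theorem hasSum_norm_sq_fourier (hf : MemLp f 2) (hab : a < b)
    (hsupp : Function.support f ⊆ Icc a b) (s : ℝ) :
    HasSum (fun n : ℤ ↦ ‖𝓕 f (s + n / (b - a))‖ ^ 2) ((b - a) * ∫ t, ‖f t‖ ^ 2) := by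
  have memLp : MemLp (fun t ↦ 𝐞 (-(t * s)) • f t) 2 := by
    refine hf.of_le ?_ (.of_forall fun t ↦ (Circle.norm_smul _ _).le)
    exact (by fun_prop : Continuous fun t ↦ 𝐞 (-(t * s))).aestronglyMeasurable.smul
      hf.aestronglyMeasurable
  have restrict : ∫ t in a..b, ‖𝐞 (-(t * s)) • f t‖ ^ 2 = ∫ t, ‖f t‖ ^ 2 := by
    simp only [Circle.norm_smul]
    exact intervalIntegral_eq_integral_of_support_subset_Icc hab.le
      ((support_norm_sq f).trans_subset hsupp)
  have ne_zero : b - a ≠ 0 := (sub_pos.2 hab).ne'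
  have coeff (n : ℤ) : (b - a) ^ 2 * ‖fourierCoeffOn hab (fun t ↦ 𝐞 (-(t * s)) • f t) n‖ ^ 2 =
      ‖𝓕 f (s + n / (b - a))‖ ^ 2 := by
    rw [fourierCoeffOn_fourierChar_smul hab hsupp, norm_smul, norm_inv, mul_pow, inv_pow,
      Real.norm_eq_abs, sq_abs, mul_inv_cancel_left₀ (pow_ne_zero 2 ne_zero)]
  have parseval := (hasSum_sq_fourierCoeffOn hab (memLp.restrict _)).mul_left ((b - a) ^ 2)
  rwa [restrict, smul_eq_mul, sq (b - a), mul_assoc, mul_inv_cancel_left₀ ne_zero, ← sq,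
    funext coeff] at parseval

lemma sin_le_abs_sin_odd_mul {N : ℕ} (hN : 0 < N) (n : ℤ) :
    sin (π / (2 * N)) ≤ |sin ((2 * n + 1) * (π / (2 * N)))| := by
  have : (0 : ℝ) < N := Nat.cast_pos.2 hN
  set δ := π / (2 * N) with hδ
  have δ_pos : 0 < δ := by positivity
  have pi_eq : π = 2 * N * δ := by rw [hδ]; field_simp
  obtain ⟨r, hr₀, hrN, reduce⟩ : ∃ r : ℤ, 0 ≤ r ∧ r + 1 ≤ N ∧
      (2 * n + 1) * δ = (2 * r + 1) * δ + (n / N : ℤ) * π := by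
    refine ⟨n % N, n.emod_nonneg (by positivity), n.emod_lt_of_pos (by positivity), ?_⟩
    have : (n : ℝ) = (n % N : ℤ) + N * (n / N : ℤ) := mod_cast (n.emod_add_mul_ediv N).symm
    rw [pi_eq]
    linear_combination 2 * δ * this
  have hr₀' : (0 : ℝ) ≤ r := mod_cast hr₀
  have hrN' : (r : ℝ) + 1 ≤ N := mod_cast hrN
  have mem : (2 * r + 1) * δ ∈ Icc δ (π - δ) := by
    constructor <;> nlinarith
  calc sin δ = min (sin δ) (sin (π - δ)) := by rw [sin_pi_sub, min_self]
    _ ≤ sin ((2 * r + 1) * δ) :=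
        strictConcaveOn_sin_Icc.concaveOn.min_le_of_mem_Icc ⟨δ_pos.le, by nlinarith [mem.1, mem.2]⟩
          ⟨by linarith [mem.1, mem.2], by linarith⟩ mem
    _ ≤ |sin ((2 * r + 1) * δ)| := le_abs_self _
    _ = |sin ((2 * n + 1) * δ)| := by
        rw [reduce, sin_add_int_mul_pi, abs_mul, abs_zpow, abs_neg, abs_one, one_zpow, one_mul]

theorem sq_mul_integral_norm_sq_le_integral_norm_sq_fwdDiff (hf : MemLp f 2) {h : ℝ} (hh : 0 < h)
    (N : ℕ) (hsupp : Function.support f ⊆ Icc a (a + N * h)) :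
    (2 * sin (π / (2 * (N + 1 : ℕ)))) ^ 2 * ∫ t, ‖f t‖ ^ 2 ≤ ∫ t, ‖Δ_[h] f t‖ ^ 2 := by
  have hf₁ := integrable_of_memLp_of_support_subset hf one_le_two measure_Icc_lt_top.ne hsupp
  set L := a + N * h - (a - h) with hL
  have L_eq : L = (N + 1) * h := by rw [hL]; ring
  have L_pos : 0 < L := by rw [L_eq]; positivity
  have hsupp' : Function.support f ⊆ Icc (a - h) (a + N * h) :=
    hsupp.trans (Icc_subset_Icc_left (by linarith))
  have hsuppΔ := support_fwdDiff_subset_Icc hh.le hsupp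
  have mode (n : ℤ) : (2 * sin (π / (2 * (N + 1 : ℕ)))) ^ 2 * ‖𝓕 f (1 / (2 * L) + n / L)‖ ^ 2 ≤
      ‖𝓕 (Δ_[h] f) (1 / (2 * L) + n / L)‖ ^ 2 := by
    have phase : π * ⟪h, 1 / (2 * L) + n / L⟫_ℝ = (2 * n + 1) * (π / (2 * (N + 1 : ℕ))) := by
      simp only [RCLike.inner_apply, conj_trivial, L_eq]
      push_cast
      field_simp
      ring
    have sin_nonneg : 0 ≤ sin (π / (2 * (N + 1 : ℕ))) := by
      refine sin_nonneg_of_nonneg_of_le_pi (by positivity) (div_le_self pi_pos.le ?_)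
      push_cast
      linarith [(N.cast_nonneg : (0 : ℝ) ≤ N)]
    rw [norm_fourier_fwdDiff hf₁, phase, ← mul_pow]
    gcongr
    exact sin_le_abs_sin_odd_mul N.succ_pos n
  have := hasSum_le mode
    ((hasSum_norm_sq_fourier hf (sub_pos.1 L_pos) hsupp' _).mul_left _)
    (hasSum_norm_sq_fourier (memLp_fwdDiff hf h) (sub_pos.1 L_pos) hsuppΔ _)
  rw [mul_left_comm] at this
  exact le_of_mul_le_mul_left this L_pos

lemma tendsto_natCast_mul_two_mul_sin :
    Tendsto (fun N : ℕ ↦ N * (2 * sin (π / (2 * (N + 1 : ℕ))))) atTop (𝓝 π) := by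
  have step : Tendsto (fun N : ℕ ↦ 1 / ((N : ℝ) + 1)) atTop (𝓝[≠] 0) :=
    tendsto_nhdsWithin_iff.2 ⟨tendsto_one_div_add_atTop_nhds_zero_nat,
      .of_forall fun N ↦ Nat.one_div_pos_of_nat.ne'⟩
  convert! (tendsto_natCast_div_add_atTop (1 : ℝ)).mul
    (((tendsto_sin_mul_div_nhdsNE_zero (π / 2)).comp step).const_mul 2) using 2 with N
  · simp only [Function.comp_apply]
    push_cast
    field_simp
  · ring

theorem integral_norm_sq_le_integral_sq_mul_norm_fourier_sq (hf : MemLp f 2) (hab : a < b)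
    (hsupp : Function.support f ⊆ Icc a b)
    (hξ : Integrable fun ξ ↦ ξ ^ 2 * ‖𝓕 f ξ‖ ^ 2) :
    ∫ t, ‖f t‖ ^ 2 ≤ (2 * (b - a)) ^ 2 * ∫ ξ, ξ ^ 2 * ‖𝓕 f ξ‖ ^ 2 := by
  have hf₁ := integrable_of_memLp_of_support_subset hf one_le_two measure_Icc_lt_top.ne hsupp
  have norm_sq : (fun ξ ↦ ξ ^ 2 * ‖𝓕 f ξ‖ ^ 2) = fun ξ ↦ ‖ξ‖ ^ 2 * ‖𝓕 f ξ‖ ^ 2 := by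
    simp only [Real.norm_eq_abs, sq_abs]
  rw [norm_sq] at hξ ⊢
  have discrete : ∀ᶠ N : ℕ in atTop,
      (N * (2 * sin (π / (2 * (N + 1 : ℕ))))) ^ 2 * ∫ t, ‖f t‖ ^ 2 ≤
        (2 * π * (b - a)) ^ 2 * ∫ ξ, ‖ξ‖ ^ 2 * ‖𝓕 f ξ‖ ^ 2 := by
    filter_upwards [eventually_gt_atTop 0] with N hN
    have hN' : (0 : ℝ) < N := Nat.cast_pos.2 hN
    have h_pos : 0 < (b - a) / N := div_pos (sub_pos.2 hab) hN'
    have end_eq : a + N * ((b - a) / N) = b := by field_simp; ring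
    have := (sq_mul_integral_norm_sq_le_integral_norm_sq_fwdDiff hf h_pos N
      (end_eq.symm ▸ hsupp)).trans (integral_norm_sq_fwdDiff_le hf₁ hf hξ _)
    calc _ = (N : ℝ) ^ 2 * ((2 * sin (π / (2 * (N + 1 : ℕ)))) ^ 2 * ∫ t, ‖f t‖ ^ 2) := by ring
      _ ≤ (N : ℝ) ^ 2 * ((2 * π * ‖(b - a) / N‖) ^ 2 * ∫ ξ, ‖ξ‖ ^ 2 * ‖𝓕 f ξ‖ ^ 2) := by gcongr
      _ = _ := by
        rw [Real.norm_of_nonneg h_pos.le]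
        field_simp
  have limit := le_of_tendsto ((tendsto_natCast_mul_two_mul_sin.pow 2).mul_const _) discrete
  refine le_of_mul_le_mul_left (limit.trans_eq ?_) (sq_pos_of_pos pi_pos)
  ring

end Wirtinger

section FourierTr

lemma integrable_of_even_of_integrableOn_Ioi {E : Type*} [NormedAddCommGroup E] {g : ℝ → E}
    (hg : g.Even) (hint : IntegrableOn g (Ioi 0)) : Integrable g := by
  have left : IntegrableOn g (Iic 0) := by
    rw [integrableOn_Iic_iff_integrableOn_Iio]
    simpa only [hg _] using IntegrableOn.comp_neg_Iio (c := 0) (f := g) (by rwa [neg_zero])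
  rw [← integrableOn_univ, ← Iic_union_Ioi]
  exact left.union hint

lemma integral_eq_two_mul_integral_Ioi_of_even {g : ℝ → ℝ} (hg : g.Even) :
    ∫ x, g x = 2 * ∫ x in Ioi 0, g x := by
  rw [← integral_comp_abs]
  congr with x
  rcases abs_choice x with h | h <;> simp only [h, hg x]

variable (w : ℝ → ℝ)

lemma fourierTr_two_pi_mul (ξ : ℝ) :
    fourierTr w (2 * π * ξ) = 𝓕 (fun t ↦ (w t : ℂ)) ξ := by
  rw [fourierTr, Real.fourier_real_eq_integral_exp_smul]
  congr with t
  rw [smul_eq_mul, mul_comm]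
  congr 2
  push_cast
  ring

lemma norm_fourierTr_neg (ω : ℝ) : ‖fourierTr w (-ω)‖ = ‖fourierTr w ω‖ := by
  have conj : fourierTr w (-ω) = starRingEnd ℂ (fourierTr w ω) := by
    simp [fourierTr, ← integral_conj, ← Complex.exp_conj]
  rw [conj, RCLike.norm_conj]

lemma even_sq_mul_norm_fourierTr_sq : (fun u ↦ u ^ 2 * ‖fourierTr w u‖ ^ 2).Even :=
  fun u ↦ by simp only [norm_fourierTr_neg, neg_sq]

lemma sq_mul_norm_fourierTr_two_pi_mul_sq (ξ : ℝ) :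
    (2 * π * ξ) ^ 2 * ‖fourierTr w (2 * π * ξ)‖ ^ 2 =
      (2 * π) ^ 2 * (ξ ^ 2 * ‖𝓕 (fun t ↦ (w t : ℂ)) ξ‖ ^ 2) := by
  rw [fourierTr_two_pi_mul]
  ring

lemma integrable_sq_mul_norm_fourierTr_sq_iff :
    Integrable (fun u ↦ u ^ 2 * ‖fourierTr w u‖ ^ 2) ↔
      Integrable fun ξ ↦ ξ ^ 2 * ‖𝓕 (fun t ↦ (w t : ℂ)) ξ‖ ^ 2 := by
  rw [← integrable_comp_mul_left_iff _ two_pi_pos.ne']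
  simp only [sq_mul_norm_fourierTr_two_pi_mul_sq]
  exact integrable_const_mul_iff (by positivity : (2 * π) ^ 2 ≠ 0).isUnit _

lemma integral_sq_mul_norm_fourierTr_sq :
    ∫ u, u ^ 2 * ‖fourierTr w u‖ ^ 2 =
      (2 * π) ^ 3 * ∫ ξ, ξ ^ 2 * ‖𝓕 (fun t ↦ (w t : ℂ)) ξ‖ ^ 2 := by
  have := Measure.integral_comp_mul_left (fun u ↦ u ^ 2 * ‖fourierTr w u‖ ^ 2) (2 * π)
  simp only [sq_mul_norm_fourierTr_two_pi_mul_sq, integral_const_mul, smul_eq_mul,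
    abs_of_pos (inv_pos.2 two_pi_pos)] at this
  rw [pow_succ', mul_assoc, this, mul_inv_cancel_left₀ two_pi_pos.ne']

lemma support_ofReal_comp :
    Function.support (fun t ↦ (w t : ℂ)) = Function.support w :=
  Function.support_comp_eq _ Complex.ofReal_eq_zero w

variable {w}

lemma integrable_sq_mul_norm_fourierTr_sq_of_lipschitzWith {K : NNReal} {a b : ℝ}
    (hw : LipschitzWith K w) (hsupp : Function.support w ⊆ Icc a b) :
    Integrable fun u ↦ u ^ 2 * ‖fourierTr w u‖ ^ 2 := by
  have hf : MemLp (fun t ↦ (w t : ℂ)) 2 := (hw.continuous.memLp_of_hasCompactSupport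
    (.of_support_subset_isCompact isCompact_Icc hsupp)).ofReal
  rw [← support_ofReal_comp] at hsupp
  exact (integrable_sq_mul_norm_fourierTr_sq_iff w).2 <| integrable_sq_mul_norm_fourier_sq_of_isBigO
    (integrable_of_memLp_of_support_subset hf one_le_two measure_Icc_lt_top.ne hsupp) hf <|
    isBigO_integral_norm_sq_fwdDiff_of_lipschitzWith (Complex.isometry_ofReal.lipschitz.comp hw)
      hsupp

end FourierTr

theorem I_lower_bound_general (w : ℝ → ℝ) {a b : ℝ} (hab : a < b) (hw : MemLp w 2)
    (hsupp : Function.support w ⊆ Icc a b)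
    (hint : IntegrableOn (fun u ↦ u ^ 2 * ‖fourierTr w u‖ ^ 2) (Ioi 0)) :
    (1 / 2) * (∫ u in Ioi (0 : ℝ), u ^ 2 * ‖fourierTr w u‖ ^ 2) ≥
      π ^ 3 / (2 * (b - a) ^ 2) * ∫ t in a..b, w t ^ 2 := by
  rw [← support_ofReal_comp] at hsupp
  have energy := integral_norm_sq_le_integral_sq_mul_norm_fourier_sq hw.ofReal hab hsupp <|
    (integrable_sq_mul_norm_fourierTr_sq_iff w).1 <|
    integrable_of_even_of_integrableOn_Ioi (even_sq_mul_norm_fourierTr_sq w) hint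
  have mass : ∫ t in a..b, w t ^ 2 = ∫ t, ‖(w t : ℂ)‖ ^ 2 := by
    rw [← intervalIntegral_eq_integral_of_support_subset_Icc hab.le
      ((support_norm_sq _).trans_subset hsupp)]
    simp only [Complex.norm_real, Real.norm_eq_abs, sq_abs]
  have half_line := (integral_eq_two_mul_integral_Ioi_of_even
    (even_sq_mul_norm_fourierTr_sq w)).symm.trans (integral_sq_mul_norm_fourierTr_sq w)
  have hab' : 0 < b - a := sub_pos.2 hab
  calc π ^ 3 / (2 * (b - a) ^ 2) * ∫ t in a..b, w t ^ 2
      ≤ π ^ 3 / (2 * (b - a) ^ 2) *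
          ((2 * (b - a)) ^ 2 * ∫ ξ, ξ ^ 2 * ‖𝓕 (fun t ↦ (w t : ℂ)) ξ‖ ^ 2) := by
        rw [mass]
        gcongr
        exact energy
    _ = (1 / 4) * ((2 * π) ^ 3 * ∫ ξ, ξ ^ 2 * ‖𝓕 (fun t ↦ (w t : ℂ)) ξ‖ ^ 2) := by
        field_simp
        ring
    _ = (1 / 2) * ∫ u in Ioi (0 : ℝ), u ^ 2 * ‖fourierTr w u‖ ^ 2 := by
        rw [← half_line]
        ring

/-- for a Lipschitz sampling function `w` supported in the unit
interval `[0,1]` and normalized by `∫₀¹ w² = 1`, the functional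
`I = ½ ∫₀^∞ u² |ŵ(u)|² du` satisfies `I ≥ π³/2`. -/
theorem I_lower_bound
    (w : ℝ → ℝ) (K : NNReal) (hw : LipschitzWith K w)
    (hsupp : Function.support w ⊆ Icc (0:ℝ) 1)
    (hnorm : (∫ t in (0:ℝ)..1, w t ^ 2) = 1) :
    (1 / 2) * (∫ u in Ioi (0:ℝ), u ^ 2 * ‖fourierTr w u‖ ^ 2) ≥ π ^ 3 / 2 := by
  simpa [hnorm] using I_lower_bound_general w one_pos
    (hw.continuous.memLp_of_hasCompactSupport
      (.of_support_subset_isCompact isCompact_Icc hsupp)) hsupp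
    (integrable_sq_mul_norm_fourierTr_sq_of_lipschitzWith hw hsupp).integrableOn
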